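/- Let p ≥ 5 be a prime. Then binom(4p, p) − binom(4p−1, 2p−1) − 1 ≡ −(48/5)·p⁵·B_{p−5} (mod p⁶). -/

import Mathlib

open Finset

/-- `x ≡ y (mod p^c)` for rationals: `x = y` or the `p`-adic valuation of `x - y`
is at least `c`. -/
def modCong (p : ℕ) (c : ℤ) (x y : ℚ) : Prop :=
  x = y ∨ c ≤ padicValRat p (x - y)

/-!
Write `F k = ∏_{0 < j < p} (k p + j)`. Both binomial coefficients are quotients of products of
these blocks, and multiplying the left-hand side by `F 0 * F 1` gives
`4 F 3 F 1 - 3 F 2 F 3 - F 0 F 1`. Pairing `j` with `p - j` turns `F k` into a polynomial in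
`p ^ 2 k (k + 1)` whose coefficients are the elementary symmetric functions `e_i` of the
`m = (p - 1) / 2` numbers `j (p - j)`. Modulo `p ^ 6` only its terms of degree at most two matter,
and as `p` divides `e_{m-1}` and `e_{m-2}`, products of two nonconstant terms vanish. In the
combination above the squares of the constant term and the linear contributions cancel, and
Wilson's theorem `F k ≡ -1` modulo `p` leaves `-48 p ^ 4 e_{m-2}`. Newton's identities give
`5 e_{m-2} ≡ ∑_{j < p} j ^ (p - 5)` modulo `p ^ 2`, and by Faulhaber's formula this power sum is
congruent to `p B_{p-5}` modulo `p ^ 2`.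
-/

section Esymm

open MvPolynomial

variable {σ R : Type*} [Fintype σ] [CommRing R] {x : σ → R} {d : R} {k : ℕ}

theorem dvd_mul_aeval_esymm (hpsum : ∀ i, 0 < i → i ≤ k → d ∣ ∑ j, x j ^ i) :
    d ∣ k * aeval x (esymm σ R k) := by
  have newton := congrArg (aeval x) (mul_esymm_eq_sum σ R k)
  simp only [map_mul, map_natCast, map_sum, map_pow, map_neg, map_one, psum, aeval_X] at newton
  rw [newton]
  refine (dvd_sum fun a ha => ?_).mul_left _
  obtain ⟨hsum, hlt⟩ := mem_filter.1 ha
  rw [HasAntidiagonal.mem_antidiagonal] at hsum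
  exact (hpsum a.2 (by omega) (by omega)).mul_left _

theorem sq_dvd_sum_pow_add_mul_aeval_esymm (hk : 0 < k)
    (hpsum : ∀ i, 0 < i → i < k → d ∣ ∑ j, x j ^ i)
    (hesymm : ∀ i, 0 < i → i < k → d ∣ aeval x (esymm σ R i)) :
    d ^ 2 ∣ ∑ j, x j ^ k + (-1) ^ k * k * aeval x (esymm σ R k) := by
  have newton := congrArg (aeval x) (psum_eq_mul_esymm_sub_sum σ R k hk)
  simp only [map_sub, map_mul, map_natCast, map_sum, map_pow, map_neg, map_one, psum, aeval_X]
    at newton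
  rw [newton, pow_succ (-1 : R) k, mul_neg_one, neg_mul, neg_mul, sub_add_eq_add_sub,
    neg_add_cancel, zero_sub, dvd_neg, sq]
  refine dvd_sum fun a ha => ?_
  obtain ⟨hsum, hpos, hlt⟩ := mem_filter.1 ha
  rw [HasAntidiagonal.mem_antidiagonal] at hsum
  exact mul_dvd_mul ((hesymm a.1 hpos hlt).mul_left _) (hpsum a.2 (by omega) (by omega))

theorem pow_dvd_prod_add_sub_sum_esymm (x : σ → R) (y : R) {r : ℕ}
    (hr : r ≤ Fintype.card σ + 1) :
    y ^ r ∣ ∏ j, (y + x j) -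
      ∑ i ∈ range r, aeval x (esymm σ R (Fintype.card σ - i)) * y ^ i := by
  have vieta : ∏ j, (y + x j) = ∑ i ∈ range (Fintype.card σ + 1),
      aeval x (esymm σ R (Fintype.card σ - i)) * y ^ i := by
    have h := congrArg (Polynomial.eval y)
      (Multiset.prod_X_add_C_eq_sum_esymm (univ.val.map x))
    simp only [Multiset.map_map, Function.comp_def, Multiset.card_map, card_val, card_univ,
      ← aeval_esymm_eq_multiset_esymm σ R, prod_map_val, Polynomial.eval_prod,
      Polynomial.eval_finsetSum, Polynomial.eval_mul, Polynomial.eval_add, Polynomial.eval_X,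
      Polynomial.eval_C, Polynomial.eval_pow] at h
    rw [h, ← sum_range_reflect]
    refine sum_congr rfl fun i hi => ?_
    rw [Nat.add_sub_cancel, Nat.sub_sub_self (mem_range_succ_iff.1 hi)]
  rw [vieta, ← sum_range_add_sum_Ico _ hr, add_sub_cancel_left]
  exact dvd_sum fun i hi => (pow_dvd_pow y (mem_Ico.1 hi).1).mul_left _

end Esymm

section BlockProd

/-- The product of the integers strictly between `k * p` and `(k + 1) * p`, through which
binomial coefficients of multiples of `p` are expressed. -/
def blockProd (p k : ℕ) : ℕ := (k * p + 1).ascFactorial (p - 1)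

variable {p : ℕ}

theorem factorial_mul_eq_mul_prod_blockProd (hp : 0 < p) (n : ℕ) :
    (n * p).factorial = n.factorial * p ^ n * ∏ k ∈ range n, blockProd p k := by
  induction n with
  | zero => simp
  | succ n ih =>
    have hblock : (n * p).factorial * blockProd p n = ((n + 1) * p - 1).factorial := by
      rw [blockProd, Nat.factorial_mul_ascFactorial, add_one_mul, Nat.add_sub_assoc hp]
    rw [← Nat.mul_factorial_pred (by positivity), ← hblock, ih, prod_range_succ,
      Nat.factorial_succ]
    ring

theorem choose_mul_prod_blockProd (hp : 0 < p) (m n : ℕ) :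
    ((m + n) * p).choose (n * p) * ∏ k ∈ range n, blockProd p k =
      (m + n).choose n * ∏ k ∈ range n, blockProd p (m + k) := by
  have hchoose := Nat.add_choose_mul_factorial_mul_factorial (m * p) (n * p)
  rw [← add_mul] at hchoose
  simp only [factorial_mul_eq_mul_prod_blockProd hp, prod_range_add,
    ← Nat.add_choose_mul_factorial_mul_factorial m n] at hchoose
  have hpos : 0 < m.factorial * n.factorial * p ^ (m + n) * ∏ k ∈ range m, blockProd p k := by
    have : ∀ k, 0 < blockProd p k := fun k => Nat.ascFactorial_pos _ _
    have := prod_pos fun k (_ : k ∈ range m) => this k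
    positivity
  apply Nat.eq_of_mul_eq_mul_left hpos
  linear_combination hchoose

theorem choose_four_mul_mul_blockProd (hp : 0 < p) :
    (4 * p).choose p * blockProd p 0 = 4 * blockProd p 3 := by
  simpa using choose_mul_prod_blockProd hp 3 1

theorem choose_four_mul_sub_one_mul_blockProd (hp : 0 < p) :
    (4 * p - 1).choose (2 * p - 1) * (blockProd p 0 * blockProd p 1) =
      3 * (blockProd p 2 * blockProd p 3) := by
  have hcentral : (4 * p).choose (2 * p) * (blockProd p 0 * blockProd p 1) =
      6 * (blockProd p 2 * blockProd p 3) := by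
    simpa [prod_range_succ, show Nat.choose 4 2 = 6 from rfl] using choose_mul_prod_blockProd hp 2 2
  have hpascal : 2 * (4 * p - 1).choose (2 * p - 1) = (4 * p).choose (2 * p) := by
    have h := Nat.add_one_mul_choose_eq (4 * p - 1) (2 * p - 1)
    rw [Nat.sub_add_cancel (by omega), Nat.sub_add_cancel (by omega)] at h
    apply Nat.eq_of_mul_eq_mul_right (show 0 < 2 * p by omega)
    linear_combination h
  rw [← hpascal] at hcentral
  linarith

theorem blockProd_modEq_neg_one [Fact p.Prime] (k : ℕ) : (blockProd p k : ℤ) ≡ -1 [ZMOD p] := by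
  rw [← ZMod.intCast_eq_intCast_iff, Int.cast_natCast, Int.cast_neg, Int.cast_one, blockProd,
    Nat.cast_ascFactorial, ← ZMod.wilsons_lemma p, ← Nat.one_ascFactorial, Nat.cast_ascFactorial]
  simp

theorem isCoprime_blockProd [Fact p.Prime] (k : ℕ) : IsCoprime (p : ℤ) (blockProd p k) := by
  obtain ⟨t, ht⟩ := (blockProd_modEq_neg_one (p := p) k).dvd
  exact ⟨-t, -1, by linear_combination ht⟩

end BlockProd

section Bernoulli

variable {p : ℕ} [Fact p.Prime]

theorem padicNorm_natCast_eq_one_of_lt {n : ℕ} (h0 : 0 < n) (hn : n < p) : padicNorm p n = 1 :=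
  (padicNorm.nat_eq_one_iff n).2 (Nat.not_dvd_of_pos_of_lt h0 hn)

theorem padicNorm_bernoulli_le_one {k : ℕ} (hk : k + 1 < p) : padicNorm p (bernoulli k) ≤ 1 := by
  induction k using Nat.strong_induction_on with
  | _ k ih =>
  rcases Nat.eq_zero_or_pos k with rfl | hk0
  · simp
  have hrec : ((k + 1 : ℕ) : ℚ) * bernoulli k =
      -∑ i ∈ range k, ((k + 1).choose i : ℚ) * bernoulli i := by
    have h := sum_bernoulli (k + 1)
    rw [if_neg (by omega), sum_range_succ, Nat.choose_succ_self_right] at h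
    exact eq_neg_of_add_eq_zero_right h
  have hnorm := congrArg (padicNorm p) hrec
  rw [padicNorm.mul, padicNorm_natCast_eq_one_of_lt k.succ_pos hk, one_mul, padicNorm.neg] at hnorm
  rw [hnorm]
  refine padicNorm.sum_le' (fun i hi => ?_) zero_le_one
  have hi := mem_range.1 hi
  rw [padicNorm.mul]
  exact mul_le_one₀ (padicNorm.of_nat _) (padicNorm.nonneg _) (ih i hi (by omega))

theorem padicNorm_pow_mul_le {u : ℚ} (hu : padicNorm p u ≤ 1) (n : ℕ) :
    padicNorm p (p ^ n * u) ≤ (p : ℚ) ^ (-n : ℤ) := by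
  have hpow : padicNorm p (p ^ n) ≤ (p : ℚ) ^ (-n : ℤ) :=
    mod_cast padicNorm.dvd_iff_norm_le.1 (dvd_refl ((p ^ n : ℕ) : ℤ))
  rw [padicNorm.mul]
  exact (mul_le_of_le_one_right (padicNorm.nonneg _) hu).trans hpow

theorem modCong_iff_padicNorm_le {c : ℤ} {x y : ℚ} :
    modCong p c x y ↔ padicNorm p (x - y) ≤ (p : ℚ) ^ (-c) := by
  have hp : (1 : ℚ) < p := by exact_mod_cast (Fact.out : p.Prime).one_lt
  rcases eq_or_ne x y with rfl | hxy
  · simp only [modCong, true_or, sub_self, padicNorm.zero, true_iff]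
    positivity
  · rw [modCong, or_iff_right hxy, padicNorm.eq_zpow_of_nonzero (sub_ne_zero.2 hxy),
      zpow_le_zpow_iff_right₀ hp, neg_le_neg_iff]

theorem modCong.trans {c : ℤ} {x y z : ℚ} (hxy : modCong p c x y) (hyz : modCong p c y z) :
    modCong p c x z := by
  rw [modCong_iff_padicNorm_le] at *
  rw [← sub_add_sub_cancel x y z]
  exact padicNorm.nonarchimedean.trans (max_le hxy hyz)

theorem modCong.pow_mul_left {c : ℤ} {u x y : ℚ} (hxy : modCong p c x y)
    (hu : padicNorm p u ≤ 1) (n : ℕ) : modCong p (n + c) (p ^ n * u * x) (p ^ n * u * y) := by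
  rw [modCong_iff_padicNorm_le] at *
  have hp : (p : ℚ) ≠ 0 := by exact_mod_cast (Fact.out : p.Prime).ne_zero
  rw [← mul_sub, padicNorm.mul, neg_add, zpow_add₀ hp]
  exact mul_le_mul (padicNorm_pow_mul_le hu n) hxy (padicNorm.nonneg _) (by positivity)

theorem modCong_intCast_iff {c : ℕ} {a b : ℤ} : modCong p c a b ↔ a ≡ b [ZMOD p ^ c] := by
  rw [modCong_iff_padicNorm_le, ← Int.cast_sub, ← padicNorm.dvd_iff_norm_le, Int.modEq_comm,
    Int.modEq_iff_dvd, Nat.cast_pow]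

theorem modCong_sum_range_pow {k : ℕ} (hk : k + 1 < p) :
    modCong p 2 (∑ j ∈ range p, (j : ℚ) ^ k) (p * bernoulli k) := by
  have hfaulhaber : ∑ j ∈ range p, (j : ℚ) ^ k - p * bernoulli k = (p : ℚ) ^ 2 *
      ∑ i ∈ range k,
        bernoulli i * (((k + 1).choose i * p ^ (k - 1 - i) : ℕ) : ℚ) / (k + 1 : ℕ) := by
    rw [sum_range_pow, sum_range_succ, Nat.choose_succ_self_right, Nat.add_sub_cancel_left,
      mul_sum, pow_one, Nat.cast_succ, mul_right_comm, mul_div_cancel_right₀ _ (by positivity),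
      mul_comm (bernoulli k), add_sub_cancel_right]
    refine sum_congr rfl fun i hi => ?_
    rw [show k + 1 - i = k - 1 - i + 2 by have := mem_range.1 hi; omega]
    push_cast
    ring
  rw [modCong_iff_padicNorm_le, hfaulhaber]
  refine padicNorm_pow_mul_le (padicNorm.sum_le' (fun i hi => ?_) zero_le_one) 2
  rw [padicNorm.div, padicNorm.mul, padicNorm_natCast_eq_one_of_lt k.succ_pos hk, div_one]
  exact mul_le_one₀ (padicNorm_bernoulli_le_one (by have := mem_range.1 hi; omega))
    (padicNorm.nonneg _) (padicNorm.of_nat _)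

theorem dvd_sum_range_pow {k : ℕ} (hk : k + 1 < p) : (p : ℤ) ∣ ∑ j ∈ range p, (j : ℤ) ^ k := by
  have hzero := FiniteField.sum_pow_lt_card_sub_one (ZMod p) k (by rw [ZMod.card]; omega)
  rw [← ZMod.intCast_zmod_eq_zero_iff_dvd, ← hzero]
  push_cast
  exact sum_nbij' (fun j => (j : ZMod p)) ZMod.val (fun _ _ => mem_univ _)
    (fun j _ => mem_range.2 (ZMod.val_lt j))
    (fun j hj => ZMod.val_cast_of_lt (mem_range.1 hj)) (fun j _ => ZMod.natCast_zmod_val j)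
    (fun _ _ => rfl)

end Bernoulli

section Reflect

theorem mul_sub_pow_modEq (n j : ℤ) (i : ℕ) :
    (j * (n - j)) ^ (i + 1) ≡
      (-1) ^ (i + 1) * (j ^ (2 * (i + 1)) - (i + 1) * n * j ^ (2 * i + 1)) [ZMOD n ^ 2] := by
  obtain ⟨c, hc⟩ := Polynomial.powAddExpansion (-j ^ 2) (n * j) (i + 1)
  refine (Int.modEq_iff_dvd.2 ⟨c * j ^ 2, ?_⟩).symm
  rw [show j * (n - j) = -j ^ 2 + n * j by ring, hc, Nat.add_sub_cancel,
    neg_pow (j ^ 2), neg_pow (j ^ 2)]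
  push_cast
  ring

theorem sum_range_mul_sub_pow_modEq {p : ℕ} [Fact p.Prime] {i : ℕ} (hi : 0 < i) (hip : 2 * i < p) :
    ∑ j ∈ range p, ((j : ℤ) * (p - j)) ^ i ≡
      (-1) ^ i * ∑ j ∈ range p, (j : ℤ) ^ (2 * i) [ZMOD p ^ 2] := by
  obtain ⟨i, rfl⟩ : ∃ l, i = l + 1 := ⟨i - 1, by omega⟩
  obtain ⟨c, hc⟩ := dvd_sum_range_pow (p := p) (k := 2 * i + 1) (by omega)
  calc _ ≡ ∑ j ∈ range p, (-1) ^ (i + 1) *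
          ((j : ℤ) ^ (2 * (i + 1)) - (i + 1) * p * (j : ℤ) ^ (2 * i + 1)) [ZMOD p ^ 2] :=
        Int.ModEq.sum fun j _ => mul_sub_pow_modEq p j i
    _ = (-1) ^ (i + 1) * ∑ j ∈ range p, (j : ℤ) ^ (2 * (i + 1)) -
          p ^ 2 * ((-1) ^ (i + 1) * (i + 1) * c) := by
        rw [← mul_sum, sum_sub_distrib, ← mul_sum, hc]
        ring
    _ ≡ _ [ZMOD p ^ 2] := Int.modEq_iff_dvd.2 ⟨(-1) ^ (i + 1) * (i + 1) * c, by ring⟩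

@[to_additive sum_range_two_mul_eq_sum_add_reflect]
theorem prod_range_two_mul_eq_prod_mul_reflect {M : Type*} [CommMonoid M] (f : ℕ → M) (m : ℕ) :
    ∏ j ∈ range (2 * m), f j = ∏ j ∈ range m, f j * f (2 * m - 1 - j) := by
  rw [two_mul, prod_range_add, prod_mul_distrib]
  congr 1
  refine prod_nbij' (m - 1 - ·) (m - 1 - ·) ?_ ?_ ?_ ?_ fun j hj => congrArg f ?_ <;> grind

variable {p m : ℕ}

/-- The products `j * (p - j)` for `0 < j ≤ m`, where `p = 2 * m + 1`; the index `j : Fin m` stands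
for the factor `j + 1`. -/
def reflectTerm (p m : ℕ) (j : Fin m) : ℤ := (j + 1) * (p - (j + 1))

theorem two_mul_sum_reflectTerm_pow (hpm : p = 2 * m + 1) {i : ℕ} (hi : 0 < i) :
    2 * ∑ j, reflectTerm p m j ^ i = ∑ j ∈ range p, ((j : ℤ) * (p - j)) ^ i := by
  subst hpm
  simp only [reflectTerm]
  rw [sum_range_succ', sum_range_two_mul_eq_sum_add_reflect,
    Fin.sum_univ_eq_sum_range (fun j => (((j : ℤ) + 1) * ((2 * m + 1 : ℕ) - (j + 1))) ^ i),
    mul_sum, Nat.cast_zero, zero_mul, zero_pow hi.ne', add_zero]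
  refine sum_congr rfl fun j hj => ?_
  rw [show 2 * m - 1 - j + 1 = 2 * m - j by have := mem_range.1 hj; omega,
    Nat.cast_sub (by have := mem_range.1 hj; omega)]
  push_cast
  ring

theorem blockProd_eq_prod (hpm : p = 2 * m + 1) (k : ℕ) :
    (blockProd p k : ℤ) = ∏ j, (p ^ 2 * (k * (k + 1)) + reflectTerm p m j) := by
  simp only [reflectTerm]
  rw [blockProd, hpm, Nat.add_sub_cancel, Nat.ascFactorial_eq_prod_range,
    prod_range_two_mul_eq_prod_mul_reflect, ← hpm, Nat.cast_prod,
    Fin.prod_univ_eq_prod_range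
      (fun j => (p : ℤ) ^ 2 * (k * (k + 1)) + ((j : ℤ) + 1) * (p - (j + 1)))]
  refine prod_congr rfl fun j hj => ?_
  rw [show k * p + 1 + (2 * m - 1 - j) = (k + 1) * p - (j + 1) by
      have := mem_range.1 hj; rw [add_one_mul]; omega,
    Nat.cast_mul, Nat.cast_sub (by have := mem_range.1 hj; rw [add_one_mul]; omega)]
  push_cast
  ring

open MvPolynomial in
/-- The `k`-th elementary symmetric function of the products `j * (p - j)` for `0 < j ≤ m`; these
are the coefficients of `blockProd p n` as a polynomial in `p ^ 2 * (n * (n + 1))`. -/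
noncomputable def reflectEsymm (p m k : ℕ) : ℤ := aeval (reflectTerm p m) (esymm (Fin m) ℤ k)

theorem blockProd_modEq (hpm : p = 2 * m + 1) (hm : 2 ≤ m) (k : ℕ) :
    (blockProd p k : ℤ) ≡ reflectEsymm p m m + reflectEsymm p m (m - 1) * (p ^ 2 * (k * (k + 1))) +
      reflectEsymm p m (m - 2) * (p ^ 2 * (k * (k + 1))) ^ 2 [ZMOD p ^ 6] := by
  have h := pow_dvd_prod_add_sub_sum_esymm (reflectTerm p m) (p ^ 2 * (k * (k + 1)))
    (r := 3) (by rw [Fintype.card_fin]; omega)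
  rw [← blockProd_eq_prod hpm, Fintype.card_fin] at h
  simp only [sum_range_succ, range_zero, sum_empty, zero_add, Nat.sub_zero, pow_zero, mul_one,
    pow_one] at h
  exact (Int.modEq_iff_dvd.2 ((Dvd.intro (((k : ℤ) * (k + 1)) ^ 3) (by ring)).trans h)).symm

theorem two_mul_sum_reflectTerm_pow_modEq [Fact p.Prime] (hpm : p = 2 * m + 1) {i : ℕ}
    (hi : 0 < i) (him : i ≤ m) :
    2 * ∑ j, reflectTerm p m j ^ i ≡ (-1) ^ i * ∑ j ∈ range p, (j : ℤ) ^ (2 * i) [ZMOD p ^ 2] := by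
  rw [two_mul_sum_reflectTerm_pow hpm hi]
  exact sum_range_mul_sub_pow_modEq hi (by omega)

theorem dvd_sum_reflectTerm_pow [Fact p.Prime] (hpm : p = 2 * m + 1) {i : ℕ}
    (hi : 0 < i) (him : i < m) : (p : ℤ) ∣ ∑ j, reflectTerm p m j ^ i := by
  have htwo : IsCoprime (p : ℤ) 2 := by
    exact_mod_cast Nat.isCoprime_iff_coprime.2 (Nat.coprime_two_right.2 ⟨m, hpm⟩)
  have hmod := (two_mul_sum_reflectTerm_pow_modEq hpm hi him.le).of_dvd (dvd_pow_self _ two_ne_zero)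
  exact htwo.dvd_of_dvd_mul_left
    (hmod.dvd_iff.2 ((dvd_sum_range_pow (by omega)).mul_left _))

theorem dvd_reflectEsymm [Fact p.Prime] (hpm : p = 2 * m + 1) {k : ℕ} (hk : 0 < k) (hkm : k < m) :
    (p : ℤ) ∣ reflectEsymm p m k := by
  have hdvd : (p : ℤ) ∣ k * reflectEsymm p m k :=
    dvd_mul_aeval_esymm fun i hi hik => dvd_sum_reflectTerm_pow hpm hi (by omega)
  refine (Int.Prime.dvd_mul' Fact.out hdvd).resolve_left fun hpk => ?_
  have := Nat.le_of_dvd hk (Int.natCast_dvd_natCast.1 hpk)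
  omega

theorem sq_dvd_sum_range_pow_add_mul_reflectEsymm [Fact p.Prime] (hpm : p = 2 * m + 1) {k : ℕ}
    (hk : 0 < k) (hkm : k ≤ m) :
    (p : ℤ) ^ 2 ∣ ∑ j ∈ range p, (j : ℤ) ^ (2 * k) + 2 * k * reflectEsymm p m k := by
  have newton : (p : ℤ) ^ 2 ∣ ∑ j, reflectTerm p m j ^ k + (-1) ^ k * k * reflectEsymm p m k :=
    sq_dvd_sum_pow_add_mul_aeval_esymm hk
      (fun i hi hik => dvd_sum_reflectTerm_pow hpm hi (by omega))
      (fun i hi hik => dvd_reflectEsymm hpm hi (by omega))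
  have hsign : ((-1 : ℤ) ^ k) * (-1) ^ k = 1 := by rw [← mul_pow]; simp
  have hpsum := (two_mul_sum_reflectTerm_pow_modEq hpm hk hkm).dvd
  obtain ⟨a, ha⟩ := newton
  obtain ⟨b, hb⟩ := hpsum
  refine ⟨(-1) ^ k * (2 * a + b), ?_⟩
  linear_combination (-1) ^ k * (2 * ha + hb) -
    ((∑ j ∈ range p, (j : ℤ) ^ (2 * k)) + 2 * k * reflectEsymm p m k) * hsign

theorem five_mul_reflectEsymm_modEq [Fact p.Prime] (hpm : p = 2 * m + 1) (hm : 3 ≤ m) :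
    5 * reflectEsymm p m (m - 2) ≡ ∑ j ∈ range p, (j : ℤ) ^ (p - 5) [ZMOD p ^ 2] := by
  obtain ⟨c, hc⟩ := dvd_reflectEsymm hpm (k := m - 2) (by omega) (by omega)
  have h := sq_dvd_sum_range_pow_add_mul_reflectEsymm hpm (k := m - 2) (by omega) (by omega)
  have hk : (2 : ℤ) * (m - 2 : ℕ) = p - 5 := by omega
  rw [show 2 * (m - 2) = p - 5 by omega, hk, sub_mul] at h
  obtain ⟨t, ht⟩ := h
  exact Int.modEq_iff_dvd.2 ⟨t - c, by linear_combination ht - p * hc⟩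

theorem four_mul_sub_three_mul_sub_modEq {p c w d : ℤ} {F : ℕ → ℤ} (hc : p ∣ c + 1)
    (hF : ∀ k : ℕ, F k ≡ c + p * w * (p ^ 2 * (k * (k + 1))) +
      p * d * (p ^ 2 * (k * (k + 1))) ^ 2 [ZMOD p ^ 6]) :
    4 * (F 3 * F 1) - 3 * (F 2 * F 3) - F 0 * F 1 ≡ -48 * p ^ 5 * d * (F 0 * F 1) [ZMOD p ^ 6] := by
  obtain ⟨s, hs⟩ := hc
  let G (t : ℤ) := c + p * w * (p ^ 2 * t) + p * d * (p ^ 2 * t) ^ 2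
  have h0 : F 0 ≡ G 0 [ZMOD p ^ 6] := hF 0
  have h1 : F 1 ≡ G 2 [ZMOD p ^ 6] := hF 1
  have h2 : F 2 ≡ G 6 [ZMOD p ^ 6] := hF 2
  have h3 : F 3 ≡ G 12 [ZMOD p ^ 6] := hF 3
  calc _ ≡ 4 * (G 12 * G 2) - 3 * (G 6 * G 12) - G 0 * G 2 [ZMOD p ^ 6] := by gcongr
    _ ≡ -48 * p ^ 5 * d * (G 0 * G 2) [ZMOD p ^ 6] := by
      -- The coefficients 4, 3, 1 cancel the terms in `c ^ 2` and `c * w`.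
      refine (Int.modEq_iff_dvd.2 ⟨48 * c * d * s - 120 * w ^ 2 +
        (96 * c - 2544) * p ^ 2 * w * d + (192 * c - 13248) * p ^ 4 * d ^ 2, ?_⟩).symm
      simp only [G]
      linear_combination 48 * p ^ 5 * c * d * hs
    _ ≡ _ [ZMOD p ^ 6] := by gcongr

theorem choose_four_mul_sub_choose_modEq [Fact p.Prime] (hpm : p = 2 * m + 1) (hm : 3 ≤ m) :
    ((4 * p).choose p : ℤ) - (4 * p - 1).choose (2 * p - 1) - 1 ≡
      -48 * p ^ 4 * reflectEsymm p m (m - 2) [ZMOD p ^ 6] := by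
  have hp : 0 < p := by omega
  obtain ⟨w, hw⟩ := dvd_reflectEsymm hpm (k := m - 1) (by omega) (by omega)
  obtain ⟨d, hd⟩ := dvd_reflectEsymm hpm (k := m - 2) (by omega) (by omega)
  have hF := blockProd_modEq hpm (by omega : 2 ≤ m)
  rw [hw, hd] at hF
  have hc : (p : ℤ) ∣ reflectEsymm p m m + 1 := by
    have h0 := (hF 0).of_dvd (dvd_pow_self _ (by norm_num))
    simpa using ((blockProd_modEq_neg_one 0).symm.trans h0).dvd
  have hcoprime : IsCoprime ((p : ℤ) ^ 6) (blockProd p 0 * blockProd p 1) :=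
    ((isCoprime_blockProd 0).mul_right (isCoprime_blockProd 1)).pow_left
  have hN : ((4 * p).choose p : ℤ) * blockProd p 0 = 4 * blockProd p 3 :=
    mod_cast choose_four_mul_mul_blockProd hp
  have hM : ((4 * p - 1).choose (2 * p - 1) : ℤ) * (blockProd p 0 * blockProd p 1) =
      3 * (blockProd p 2 * blockProd p 3) :=
    mod_cast choose_four_mul_sub_one_mul_blockProd hp
  refine Int.modEq_iff_dvd.2 (hcoprime.dvd_of_dvd_mul_right ?_)
  obtain ⟨t, ht⟩ := (four_mul_sub_three_mul_sub_modEq hc hF).dvd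
  refine ⟨t, ?_⟩
  rw [hd]
  linear_combination ht + hM - blockProd p 1 * hN

end Reflect

theorem stmt9 (p : ℕ) (hp : p.Prime) (hp5 : 5 ≤ p) :
    modCong p 6 (((4*p).choose p : ℚ) - ((4*p-1).choose (2*p-1) : ℚ) - 1)
      (-(48/5) * (p:ℚ)^5 * bernoulli (p-5)) := by
  have : Fact p.Prime := ⟨hp⟩
  obtain ⟨m, hpm⟩ : ∃ m, p = 2 * m + 1 := hp.odd_of_ne_two (by omega)
  obtain rfl | hm : m = 2 ∨ 3 ≤ m := by omega
  · -- For `p = 5` the coefficient `e_{m-2} = e_0 = 1` is not divisible by `p`.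
    subst hpm
    have h : modCong 5 (6 : ℕ) (15504 - 92378 - 1 : ℤ) (-30000 : ℤ) :=
      modCong_intCast_iff.2 (by decide)
    convert h using 1 <;> norm_num [Nat.choose]
  have hbinom := (modCong_intCast_iff (p := p) (c := 6)).2 (choose_four_mul_sub_choose_modEq hpm hm)
  have hesymm := (modCong_intCast_iff (p := p) (c := 2)).2 (five_mul_reflectEsymm_modEq hpm hm)
  push_cast at hbinom hesymm
  have hbern := hesymm.trans (modCong_sum_range_pow (by omega))
  have hcoeff : padicNorm p ((-48 : ℤ) / (5 : ℕ)) ≤ 1 := by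
    rw [padicNorm.div, padicNorm_natCast_eq_one_of_lt (by norm_num) (by omega), div_one]
    exact padicNorm.of_int _
  refine hbinom.trans ?_
  convert hbern.pow_mul_left hcoeff 4 using 1 <;> push_cast <;> ring
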